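/- Let A be a real n×n matrix and set P := −(A + Aᵀ)/2. Then P satisfies the equation 2P² + AᵀP + PA = 0 if and only if A is normal, i.e. A Aᵀ = Aᵀ A. -/

import Mathlib

open Matrix

/-!
Eliminating `b = -2p - a` turns the Riccati expression `2p² + bp + pa` into the commutator
`pa - ap`, while `ab - ba = 2(pa - ap)`. So, up to the factor `2`, the Riccati equation asks that
`a` and `b` commute. For `b = aᵀ` this is normality.
-/

section Ring

variable {R : Type*} [Ring R] {a b p : R}

theorem riccati_eq_commutator (hp : 2 * p = -(a + b)) :
    2 * p ^ 2 + b * p + p * a = p * a - a * p := by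
  obtain rfl : b = -(2 * p) - a := by rw [hp]; abel
  noncomm_ring

theorem two_mul_commutator (hp : 2 * p = -(a + b)) :
    2 * (p * a - a * p) = a * b - b * a := by
  obtain rfl : b = -(2 * p) - a := by rw [hp]; abel
  noncomm_ring

theorem stmt_3_general (h2 : IsLeftRegular (2 : R)) (hp : 2 * p = -(a + b)) :
    2 * p ^ 2 + b * p + p * a = 0 ↔ a * b = b * a := by
  rw [riccati_eq_commutator hp, ← h2.mul_left_eq_zero_iff, two_mul_commutator hp, sub_eq_zero]

end Ring

section Matrix

variable {ι R : Type*} [Fintype ι] [DecidableEq ι] [CommRing R]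

theorem matrix_div_mul_cancel (M : Matrix ι ι R) {N : Matrix ι ι R} (hN : IsUnit N) :
    M / N * N = M := by
  rw [div_eq_mul_inv, nonsing_inv_mul_cancel_right _ _ ((isUnit_iff_isUnit_det N).mp hN)]

theorem matrix_two_mul_neg_div_two (M : Matrix ι ι R) (h2 : IsUnit (2 : Matrix ι ι R)) :
    2 * -(M / 2) = -M := by
  rw [mul_neg, (Commute.ofNat_left 2 _).eq, matrix_div_mul_cancel M h2]

end Matrix

theorem stmt_3 (n : ℕ) (A : Matrix (Fin n) (Fin n) ℝ) :
    2 * (-((A + Aᵀ) / 2)) ^ 2 + Aᵀ * (-((A + Aᵀ) / 2)) + (-((A + Aᵀ) / 2)) * A = 0 ↔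
    A * Aᵀ = Aᵀ * A := by
  have h2 : IsUnit (2 : Matrix (Fin n) (Fin n) ℝ) := by
    simpa only [map_ofNat] using (two_ne_zero (α := ℝ)).isUnit.map (algebraMap ℝ _)
  exact stmt_3_general h2.isRegular.left (matrix_two_mul_neg_div_two (A + Aᵀ) h2)
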